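/- (t-intersecting Erdős–Ko–Rado theorem, with Wilson's sharp bound) Let t, k, n be positive integers with t ≤ k ≤ n and n ≥ (t+1)(k−t+1). If 𝓕 ⊆ C([n],k) is t-intersecting, then |𝓕| ≤ C(n−t, k−t). -/

import Mathlib

open Finset

/-- `[n] = {1, …, n}` as a finset of naturals. -/
def Iv (n : ℕ) : Finset ℕ := Finset.Icc 1 n

/-- The collection of `k`-element subsets of `[n]`. -/
def KSets (n k : ℕ) : Finset (Finset ℕ) := (Iv n).powersetCard k

/-- Codegree of `E` in the family `F`: the number of members of `F` containing `E`. -/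
def codeg (F : Finset (Finset ℕ)) (E : Finset ℕ) : ℕ :=
  (F.filter fun A => E ⊆ A).card

/-- Codegree squared sum of a `k`-uniform family on `[n]`. -/
def co2 (n k : ℕ) (F : Finset (Finset ℕ)) : ℕ :=
  ∑ E ∈ KSets n (k - 1), codeg F E ^ 2

/-- `t`-intersecting family. -/
def IntersectingT (t : ℕ) (F : Finset (Finset ℕ)) : Prop :=
  ∀ A ∈ F, ∀ B ∈ F, t ≤ (A ∩ B).card

/-- `ζ_u(F)`: the number of unordered pairs of distinct members of `F` meeting in
exactly `u` elements. -/
def zeta (u : ℕ) (F : Finset (Finset ℕ)) : ℕ :=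
  ((F.offDiag.filter fun p => (p.1 ∩ p.2).card = u).image
    fun p => ({p.1, p.2} : Finset (Finset ℕ))).card

/-- `ζ_{u,v}(𝓖,𝓗)`: the number of unordered pairs `{F,G}` with `F ∈ 𝓖`, `G ∈ 𝓗`,
`|F| = |G| = u+1`, `|F ∩ G| = u` and `v ∈ F ∩ G`. -/
def zeta2v (u v : ℕ) (G H : Finset (Finset ℕ)) : ℕ :=
  (((G ×ˢ H).filter fun p =>
      p.1.card = u + 1 ∧ p.2.card = u + 1 ∧ (p.1 ∩ p.2).card = u ∧ v ∈ p.1 ∩ p.2).image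
    fun p => ({p.1, p.2} : Finset (Finset ℕ))).card

/-- The Hilton–Milner type family `H(n,k,t)`. -/
def HM (n k t : ℕ) : Finset (Finset ℕ) :=
  ((KSets n k).filter fun F => Iv t ⊆ F ∧ (F ∩ Finset.Icc (t + 1) (k + 1)).Nonempty) ∪
    ((Iv t).image fun i => (Iv (k + 1)).erase i)

/-- The Frankl type family `A(n,k,t)`. -/
def AK (n k t : ℕ) : Finset (Finset ℕ) :=
  (KSets n k).filter fun F => t + 1 ≤ (F ∩ Iv (t + 2)).card

/-- Two families on `[n]` are isomorphic if one is the image of the other under a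
permutation of `[n]` applied elementwise to each member. -/
def Isom (n : ℕ) (F G : Finset (Finset ℕ)) : Prop :=
  ∃ σ : Equiv.Perm ℕ, (∀ x ∈ Iv n, σ x ∈ Iv n) ∧ G = F.image fun A => A.image σ

/-- The elementary shift `δ_{ij}` of a single set. -/
def shiftSet (i j : ℕ) (𝓐 : Finset (Finset ℕ)) (A : Finset ℕ) : Finset ℕ :=
  if j ∈ A ∧ i ∉ A ∧ insert i (A.erase j) ∉ 𝓐 then insert i (A.erase j) else A

/-- The shift operation `Δ_{ij}` on families. -/
def shiftFam (i j : ℕ) (𝓐 : Finset (Finset ℕ)) : Finset (Finset ℕ) :=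
  𝓐.image (shiftSet i j 𝓐)

/-- Left-compressed family. -/
def LeftCompressed (n : ℕ) (F : Finset (Finset ℕ)) : Prop :=
  ∀ i j : ℕ, 1 ≤ i → i < j → j ≤ n → shiftFam i j F = F

/-- `g` is a generating set of `F ⊆ C([n],k)`: its members are subsets of `[n]` of size at
most `k`, and `U(g) ∩ C([n],k) = F`. -/
def IsGenSet (n k : ℕ) (F g : Finset (Finset ℕ)) : Prop :=
  (∀ E ∈ g, E ⊆ Iv n ∧ E.card ≤ k) ∧
    (KSets n k).filter (fun A => ∃ E ∈ g, E ⊆ A) = F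

/-- `s⁺` of a collection of finsets: the maximum element appearing. -/
def sPlus (g : Finset (Finset ℕ)) : ℕ := g.sup fun E => E.sup id

/-- `g*_i`: the members of `g` of size `i` containing `s`. -/
def gStar (g : Finset (Finset ℕ)) (s i : ℕ) : Finset (Finset ℕ) :=
  g.filter fun E => s ∈ E ∧ E.card = i

/-- `𝒟(ℰ) = ∪_{E ∈ ℰ} {B ∈ C([n],k) : B ∩ [s⁺(E)] = E}`. -/
def Dcal (n k : ℕ) (ℰ : Finset (Finset ℕ)) : Finset (Finset ℕ) :=
  (KSets n k).filter fun B => ∃ E ∈ ℰ, B ∩ Iv (E.sup id) = E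

/-- The family of `k`-subsets of `[n]` generated by `g`. -/
def genFam (n k : ℕ) (g : Finset (Finset ℕ)) : Finset (Finset ℕ) :=
  (KSets n k).filter fun A => ∃ E ∈ g, E ⊆ A

/-- Integer binomial coefficient: `C(a,b) = 0` when `b < 0` or `b > a`. -/
def ichoose (a b : ℤ) : ℤ :=
  if 0 ≤ b ∧ b ≤ a then (a.toNat.choose b.toNat : ℤ) else 0

/-! Following Ahlswede and Khachatrian, pass to a `t`-intersecting family `F` of maximum size
which is moreover left-compressed. A set all of whose `k`-element supersets lie in `F` *generates*
`F`, and any two generators of size at most `k` meet in at least `t` points. Suppose `F` is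
generated by the traces of its members on `[l]`. Consider the generators `E ⊆ [l]` that cease to
generate when their point `l` is deleted. Two of them meet in more than `t` points as soon as both
miss a common point of `[l]`. Hence, for suitable sets `X` and `Y` of such generators, one may
delete from `F` the members with trace in `Y` and add the `k`-sets with trace `E \ {l}`, `E ∈ X`,
without destroying the `t`-intersection property. Maximality of `F` turns this into inequalities
between binomial coefficients. Exchanging generators of complementary sizes shows that all these
generators have size `(l + t) / 2`. Averaging, over `j < l`, the exchange of those avoiding `j`
for those containing `j` then shows that there are none when `l ≥ t + 3`.

So `F` is generated by traces on `[t + 2]`. It is then either contained in a star, or in the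
Frankl family `AK n k t`, which is no larger than a star since `(t + 1) * (k - t + 1) ≤ n`. For
`t = 1` the exchange argument breaks down at `n = 2 * k`, but this is the classical theorem. -/

section FinsetLemmas

variable {α : Type*} [DecidableEq α]

lemma card_insert_erase_of_notMem {s : Finset α} {a b : α} (ha : a ∉ s) (hb : b ∈ s) :
    #(insert a (s.erase b)) = #s := by
  rw [card_insert_of_notMem (notMem_mono (erase_subset b s) ha), card_erase_add_one hb]

lemma subset_of_card_le_card_inter {s t : Finset α} (h : #s ≤ #(s ∩ t)) : s ⊆ t :=
  inter_eq_left.1 (eq_of_subset_of_card_le inter_subset_left h)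

lemma card_powersetCard_filter_inter_eq {V S E : Finset α} {k : ℕ} (hSV : S ⊆ V) (hES : E ⊆ S)
    (hk : #E ≤ k) :
    #{A ∈ V.powersetCard k | A ∩ S = E} = (#V - #S).choose (k - #E) := by
  have heq : {A ∈ V.powersetCard k | A ∩ S = E}
      = {A ∈ (V \ (S \ E)).powersetCard k | E ⊆ A} := by
    ext A
    simp only [mem_filter, mem_powersetCard, Finset.ext_iff, subset_iff, mem_inter, mem_sdiff]
    grind
  have hEV : E ⊆ V \ (S \ E) := subset_sdiff.2 ⟨hES.trans hSV, disjoint_sdiff⟩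
  rw [heq, card_filter_powersetCard_subset E _ k hEV hk,
    card_sdiff_of_subset (sdiff_subset.trans hSV), card_sdiff_of_subset hES]
  have := card_le_card hSV
  have := card_le_card hES
  congr 1
  lia

lemma exists_superset_card_eq_card_inter_lt {V E G : Finset α} {k t : ℕ} (hEV : E ⊆ V)
    (hGV : G ⊆ V) (hEk : #E ≤ k) (hGk : #G ≤ k) (hkV : k ≤ #V) (hkt : 2 * k < #V + t)
    (hEG : #(E ∩ G) < t) :
    ∃ B ∈ V.powersetCard k, E ⊆ B ∧ #(B ∩ G) < t := by
  have hsplit : ∀ B ⊆ V, V \ G ⊆ B → #(B ∩ G) + (#V - #G) = #B := by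
    intro B hBV hGB
    rw [← card_sdiff_of_subset hGV, ← card_inter_add_card_sdiff B G]
    congr 2
    exact Subset.antisymm (subset_sdiff.2 ⟨hGB, sdiff_disjoint⟩) (sdiff_subset_sdiff hBV le_rfl)
  have hWV : E ∪ V \ G ⊆ V := union_subset hEV sdiff_subset
  obtain hk | hk := le_total k #(E ∪ V \ G)
  · obtain ⟨B, hEB, hBW, hB⟩ := exists_subsuperset_card_eq subset_union_left hEk hk
    refine ⟨B, mem_powersetCard.2 ⟨hBW.trans hWV, hB⟩, hEB, (card_le_card ?_).trans_lt hEG⟩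
    intro x hx
    have := hBW (mem_inter.1 hx).1
    grind
  · obtain ⟨B, hWB, hBV, hB⟩ := exists_subsuperset_card_eq hWV hk hkV
    have := hsplit B hBV (subset_union_right.trans hWB)
    exact ⟨B, mem_powersetCard.2 ⟨hBV, hB⟩, subset_union_left.trans hWB, by lia⟩

lemma sum_card_filter_mem (S : Finset α) (C : Finset (Finset α)) :
    ∑ j ∈ S, #{E ∈ C | j ∈ E} = ∑ E ∈ C, #(S ∩ E) := by
  simpa only [bipartiteAbove, bipartiteBelow, filter_mem_eq_inter] using
    sum_card_bipartiteAbove_eq_sum_card_bipartiteBelow (s := S) (t := C) (fun j E => j ∈ E)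

lemma sum_card_filter_notMem (S : Finset α) (C : Finset (Finset α)) :
    ∑ j ∈ S, #{E ∈ C | j ∉ E} = ∑ E ∈ C, #(S \ E) := by
  simpa only [bipartiteAbove, bipartiteBelow, filter_notMem_eq_sdiff] using
    sum_card_bipartiteAbove_eq_sum_card_bipartiteBelow (s := S) (t := C) (fun j E => j ∉ E)

theorem card_le_choose_of_intersecting {V : Finset α} {k : ℕ} {𝒜 : Finset (Finset α)}
    (h𝒜 : 𝒜 ⊆ V.powersetCard k) (hint : (𝒜 : Set (Finset α)).Intersecting) (hk : 2 * k ≤ #V) :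
    #𝒜 ≤ (#V - 1).choose (k - 1) := by
  let e : Fin #V ↪ α := V.equivFin.symm.toEmbedding.trans (Function.Embedding.subtype _)
  have hV : V ⊆ univ.map e := fun x hx =>
    mem_map.2 ⟨V.equivFin ⟨x, hx⟩, mem_univ _, by simp [e]⟩
  obtain ⟨ℬ, -, rfl⟩ : ∃ ℬ ⊆ univ, 𝒜 = ℬ.map (mapEmbedding e).toEmbedding := by
    refine subset_map_iff.1 fun A hA => ?_
    obtain ⟨B, -, rfl⟩ := subset_map_iff.1 ((mem_powersetCard.1 (h𝒜 hA)).1.trans hV)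
    exact mem_map_of_mem _ (mem_univ B)
  rw [card_map]
  apply erdos_ko_rado _ _ (by lia)
  · intro A hA B hB hAB
    exact hint (mem_map_of_mem _ hA) (mem_map_of_mem _ hB) ((disjoint_map e).2 hAB)
  · intro B hB
    simpa using (mem_powersetCard.1 (h𝒜 (mem_map_of_mem _ hB))).2

end FinsetLemmas

section Binomial

lemma mul_choose_le_mul_choose_succ_iff {N p a b : ℕ} (hp : p ≤ N) :
    a * N.choose p ≤ b * N.choose (p + 1) ↔ a * (p + 1) ≤ b * (N - p) := by
  calc a * N.choose p ≤ b * N.choose (p + 1)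
      ↔ a * N.choose p * (p + 1) ≤ b * N.choose (p + 1) * (p + 1) :=
        (Nat.mul_le_mul_right_iff p.succ_pos).symm
    _ ↔ N.choose p * (a * (p + 1)) ≤ N.choose p * (b * (N - p)) := by
        rw [mul_assoc b, Nat.choose_succ_right_eq, mul_right_comm, mul_comm _ (N.choose p),
          mul_left_comm b]
    _ ↔ a * (p + 1) ≤ b * (N - p) := Nat.mul_le_mul_left_iff (Nat.choose_pos hp)

lemma choose_mul_choose_lt_choose_succ_mul_choose_succ {N p q : ℕ} (h : p + q + 1 < N) :
    N.choose p * N.choose q < N.choose (p + 1) * N.choose (q + 1) := by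
  have hpos : 0 < N.choose p * N.choose q :=
    Nat.mul_pos (Nat.choose_pos (by lia)) (Nat.choose_pos (by lia))
  have hlt : (p + 1) * (q + 1) < (N - p) * (N - q) :=
    calc (p + 1) * (q + 1) < (q + 2) * (p + 2) := by nlinarith
      _ ≤ (N - p) * (N - q) := Nat.mul_le_mul (by lia) (by lia)
  refine Nat.lt_of_mul_lt_mul_right (a := (p + 1) * (q + 1)) ?_
  calc N.choose p * N.choose q * ((p + 1) * (q + 1))
      < N.choose p * N.choose q * ((N - p) * (N - q)) := Nat.mul_lt_mul_of_pos_left hlt hpos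
    _ = (N.choose p * (N - p)) * (N.choose q * (N - q)) := by ring
    _ = N.choose (p + 1) * N.choose (q + 1) * ((p + 1) * (q + 1)) := by
      rw [← Nat.choose_succ_right_eq, ← Nat.choose_succ_right_eq]; ring

end Binomial

section Basic

variable {n k t : ℕ} {F : Finset (Finset ℕ)}

lemma mem_Iv {x : ℕ} : x ∈ Iv n ↔ 1 ≤ x ∧ x ≤ n := mem_Icc

lemma card_Iv (n : ℕ) : #(Iv n) = n := by simp [Iv]

lemma Iv_subset_Iv {l : ℕ} (h : l ≤ n) : Iv l ⊆ Iv n := Icc_subset_Icc_right h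

lemma mem_KSets {A : Finset ℕ} : A ∈ KSets n k ↔ A ⊆ Iv n ∧ #A = k := mem_powersetCard

lemma insert_erase_mem_KSets {i j : ℕ} {A : Finset ℕ} (hA : A ∈ KSets n k) (hi : i ∈ Iv n)
    (hiA : i ∉ A) (hjA : j ∈ A) : insert i (A.erase j) ∈ KSets n k := by
  rw [mem_KSets] at hA ⊢
  exact ⟨insert_subset hi ((erase_subset j A).trans hA.1),
    (card_insert_erase_of_notMem hiA hjA).trans hA.2⟩

lemma card_filter_KSets_superset {E : Finset ℕ} (hE : E ⊆ Iv n) (hEk : #E ≤ k) :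
    #{A ∈ KSets n k | E ⊆ A} = (n - #E).choose (k - #E) := by
  rw [KSets, card_filter_powersetCard_subset E _ k hE hEk, card_Iv]

lemma card_le_choose_of_forall_superset {E : Finset ℕ} (hF : F ⊆ KSets n k) (hE : E ⊆ Iv n)
    (hEk : #E ≤ k) (hEF : ∀ A ∈ F, E ⊆ A) : #F ≤ (n - #E).choose (k - #E) :=
  card_filter_KSets_superset hE hEk ▸
    card_le_card fun A hA => mem_filter.2 ⟨hF hA, hEF A hA⟩

/-- The `k`-subsets of `[n]` whose trace on `[l]` belongs to `Z`. -/
def withTrace (n k l : ℕ) (Z : Finset (Finset ℕ)) : Finset (Finset ℕ) :=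
  {A ∈ KSets n k | A ∩ Iv l ∈ Z}

lemma card_withTrace {l : ℕ} {Z : Finset (Finset ℕ)} (hln : l ≤ n)
    (hZ : ∀ E ∈ Z, E ⊆ Iv l ∧ #E ≤ k) :
    #(withTrace n k l Z) = ∑ E ∈ Z, (n - l).choose (k - #E) := by
  rw [card_eq_sum_card_fiberwise (s := withTrace n k l Z) (f := (· ∩ Iv l)) (t := Z)
    fun A hA => (mem_filter.1 hA).2]
  refine sum_congr rfl fun E hE => ?_
  have hfiber : {A ∈ withTrace n k l Z | A ∩ Iv l = E} = {A ∈ KSets n k | A ∩ Iv l = E} := by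
    rw [withTrace, filter_filter]
    exact filter_congr fun A _ => ⟨fun h => h.2, fun h => ⟨h ▸ hE, h⟩⟩
  rw [hfiber, KSets,
    card_powersetCard_filter_inter_eq (Iv_subset_Iv hln) (hZ E hE).1 (hZ E hE).2, card_Iv, card_Iv]

end Basic

section Intersecting

variable {n k t : ℕ} {F G : Finset (Finset ℕ)}

lemma IntersectingT.union (hF : IntersectingT t F) (hG : IntersectingT t G)
    (hFG : ∀ A ∈ F, ∀ B ∈ G, t ≤ #(A ∩ B)) : IntersectingT t (F ∪ G) := by
  intro A hA B hB
  rcases mem_union.1 hA with hA | hA <;> rcases mem_union.1 hB with hB | hB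
  · exact hF A hA B hB
  · exact hFG A hA B hB
  · exact inter_comm A B ▸ hFG B hB A hA
  · exact hG A hA B hB

lemma IntersectingT.mono (hG : IntersectingT t G) (h : F ⊆ G) : IntersectingT t F :=
  fun A hA B hB => hG A (h hA) B (h hB)

lemma IntersectingT.intersecting (hF : IntersectingT 1 F) :
    (F : Set (Finset ℕ)).Intersecting := fun A hA B hB =>
  not_disjoint_iff_nonempty_inter.2 (card_pos.1 (hF A hA B hB))

lemma IntersectingT.card_le_one (hF : F ⊆ KSets n t) (hint : IntersectingT t F) : #F ≤ 1 := by
  refine Finset.card_le_one.2 fun A hA B hB => ?_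
  have hAt := (mem_KSets.1 (hF hA)).2
  have hBt := (mem_KSets.1 (hF hB)).2
  exact eq_of_subset_of_card_le
    (subset_of_card_le_card_inter (hAt.le.trans (hint A hA B hB))) (hBt.le.trans hAt.ge)

/-- A `t`-intersecting family of `k`-subsets of `[n]` of the largest possible size. -/
structure IsMaximumIntersecting (n k t : ℕ) (F : Finset (Finset ℕ)) : Prop where
  subset_KSets : F ⊆ KSets n k
  intersectingT : IntersectingT t F
  card_le : ∀ G ⊆ KSets n k, IntersectingT t G → #G ≤ #F

lemma exists_isMaximumIntersecting (n k t : ℕ) : ∃ F, IsMaximumIntersecting n k t F := by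
  classical
  obtain ⟨F, hF, hmax⟩ := exists_max_image {F ∈ (KSets n k).powerset | IntersectingT t F} card
    ⟨∅, mem_filter.2 ⟨empty_mem_powerset _, fun A hA => absurd hA (notMem_empty A)⟩⟩
  simp only [mem_filter, mem_powerset, and_imp] at hF hmax
  exact ⟨F, hF.1, hF.2, hmax⟩

end Intersecting

section Shifting

variable {n k t i j : ℕ} {F : Finset (Finset ℕ)} {A B : Finset ℕ}

lemma shiftSet_injOn (i j : ℕ) (F : Finset (Finset ℕ)) :
    Set.InjOn (shiftSet i j F) (F : Set (Finset ℕ)) := by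
  intro A hA B hB h
  unfold shiftSet at h
  split_ifs at h with hAs hBs hBs
  · have herase : A.erase j = B.erase j := by
      rw [← erase_insert (notMem_mono (erase_subset j A) hAs.2.1), h,
        erase_insert (notMem_mono (erase_subset j B) hBs.2.1)]
    rw [← insert_erase hAs.1, herase, insert_erase hBs.1]
  · exact absurd (h ▸ hB) hAs.2.2
  · exact absurd (h ▸ hA) hBs.2.2
  · exact h

lemma card_shiftFam (i j : ℕ) (F : Finset (Finset ℕ)) : #(shiftFam i j F) = #F :=
  card_image_of_injOn (shiftSet_injOn i j F)

lemma shiftFam_subset_KSets (hi : i ∈ Iv n) (hF : F ⊆ KSets n k) :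
    shiftFam i j F ⊆ KSets n k := by
  refine image_subset_iff.2 fun A hA => ?_
  unfold shiftSet
  split_ifs with h
  · exact insert_erase_mem_KSets (hF hA) hi h.2.1 h.1
  · exact hF hA

lemma insert_erase_inter_insert_erase :
    insert i (A.erase j) ∩ insert i (B.erase j) = insert i ((A ∩ B).erase j) := by
  rw [← insert_inter_distrib, erase_inter, inter_erase, erase_idem]

lemma IntersectingT.le_card_insert_erase_inter (hF : IntersectingT t F) (hA : A ∈ F) (hB : B ∈ F)
    (hjA : j ∈ A) (hiA : i ∉ A) (hBs : j ∈ B → i ∉ B → insert i (B.erase j) ∈ F) :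
    t ≤ #(insert i (A.erase j) ∩ B) := by
  by_cases hj : j ∈ B
  · by_cases hi : i ∈ B
    · rw [insert_inter_of_mem hi, erase_inter, card_insert_erase_of_notMem
        (notMem_mono inter_subset_left hiA) (mem_inter.2 ⟨hjA, hj⟩)]
      exact hF A hA B hB
    · rw [insert_inter_of_notMem hi, erase_inter, ← inter_erase, ← inter_insert_of_notMem hiA]
      exact hF A hA _ (hBs hj hi)
  · calc t ≤ #(A ∩ B) := hF A hA B hB
      _ = #(A.erase j ∩ B) := by
        rw [erase_inter, erase_eq_of_notMem (notMem_mono inter_subset_right hj)]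
      _ ≤ #(insert i (A.erase j) ∩ B) :=
        card_le_card (inter_subset_inter_right (subset_insert _ _))

lemma IntersectingT.shiftFam (hF : IntersectingT t F) :
    IntersectingT t (shiftFam i j F) := by
  refine forall_mem_image.2 fun A hA => forall_mem_image.2 fun B hB => ?_
  unfold shiftSet
  split_ifs with hAs hBs hBs
  · rw [insert_erase_inter_insert_erase, card_insert_erase_of_notMem
      (notMem_mono inter_subset_left hAs.2.1) (mem_inter.2 ⟨hAs.1, hBs.1⟩)]
    exact hF A hA B hB
  · exact hF.le_card_insert_erase_inter hA hB hAs.1 hAs.2.1 (by tauto)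
  · rw [inter_comm]
    exact hF.le_card_insert_erase_inter hB hA hBs.1 hBs.2.1 (by tauto)
  · exact hF A hA B hB

lemma IsMaximumIntersecting.shiftFam (hi : i ∈ Iv n) (hF : IsMaximumIntersecting n k t F) :
    IsMaximumIntersecting n k t (shiftFam i j F) where
  subset_KSets := shiftFam_subset_KSets hi hF.subset_KSets
  intersectingT := hF.intersectingT.shiftFam
  card_le G hG hint := (hF.card_le G hG hint).trans (card_shiftFam i j F).ge

lemma sum_shiftSet_lt (hij : i < j) (hA : shiftSet i j F A ≠ A) :
    ∑ x ∈ shiftSet i j F A, x < ∑ x ∈ A, x := by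
  unfold shiftSet at hA ⊢
  split_ifs at hA ⊢ with h
  · rw [sum_insert (notMem_mono (erase_subset j A) h.2.1), ← add_sum_erase A _ h.1]
    lia
  · exact absurd rfl hA

lemma sum_shiftFam_lt (hij : i < j) (hF : shiftFam i j F ≠ F) :
    ∑ A ∈ shiftFam i j F, ∑ x ∈ A, x < ∑ A ∈ F, ∑ x ∈ A, x := by
  obtain ⟨A, hA, hne⟩ : ∃ A ∈ F, shiftSet i j F A ≠ A := by
    by_contra! hfix
    exact hF ((image_congr hfix).trans image_id)
  rw [shiftFam, sum_image (shiftSet_injOn i j F)]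
  refine sum_lt_sum (fun B _ => ?_) ⟨A, hA, sum_shiftSet_lt hij hne⟩
  obtain hB | hB := eq_or_ne (shiftSet i j F B) B
  · rw [hB]
  · exact (sum_shiftSet_lt hij hB).le

lemma exists_isMaximumIntersecting_leftCompressed (n k t : ℕ) :
    ∃ F, IsMaximumIntersecting n k t F ∧ LeftCompressed n F := by
  classical
  obtain ⟨F₀, hF₀⟩ := exists_isMaximumIntersecting n k t
  obtain ⟨F, hF, hmin⟩ := exists_min_image
    {F ∈ (KSets n k).powerset | IsMaximumIntersecting n k t F} (fun F => ∑ A ∈ F, ∑ x ∈ A, x)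
    ⟨F₀, mem_filter.2 ⟨mem_powerset.2 hF₀.subset_KSets, hF₀⟩⟩
  have hFmax := (mem_filter.1 hF).2
  refine ⟨F, hFmax, fun i j hi hij hjn => ?_⟩
  by_contra hne
  have hshift := hFmax.shiftFam (j := j) (mem_Iv.2 ⟨hi, hij.le.trans hjn⟩)
  exact (sum_shiftFam_lt hij hne).not_ge
    (hmin _ (mem_filter.2 ⟨mem_powerset.2 hshift.subset_KSets, hshift⟩))

lemma LeftCompressed.insert_erase_mem (hF : LeftCompressed n F) (hi : 1 ≤ i) (hij : i < j)
    (hjn : j ≤ n) (hA : A ∈ F) (hjA : j ∈ A) (hiA : i ∉ A) : insert i (A.erase j) ∈ F := by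
  by_contra hnot
  have hmem : shiftSet i j F A ∈ shiftFam i j F := mem_image_of_mem _ hA
  rw [hF i j hi hij hjn, shiftSet, if_pos ⟨hjA, hiA, hnot⟩] at hmem
  exact hnot hmem

end Shifting

section Generators

variable {n k t l : ℕ} {F : Finset (Finset ℕ)} {E G : Finset ℕ}

/-- `E` generates in `F`: every `k`-subset of `[n]` containing `E` belongs to `F`. -/
def IsGenerator (n k : ℕ) (F : Finset (Finset ℕ)) (E : Finset ℕ) : Prop :=
  ∀ B ∈ KSets n k, E ⊆ B → B ∈ F

/-- `F` is generated on `[l]`: the traces on `[l]` of its members are generators. -/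
def IsGeneratedOn (n k l : ℕ) (F : Finset (Finset ℕ)) : Prop :=
  ∀ A ∈ F, IsGenerator n k F (A ∩ Iv l)

lemma IsGenerator.mono (hE : IsGenerator n k F E) (hEG : E ⊆ G) : IsGenerator n k F G :=
  fun B hB hGB => hE B hB (hEG.trans hGB)

lemma IntersectingT.le_card_inter_of_isGenerator (hint : IntersectingT t F) (hkn : k ≤ n)
    (hkt : 2 * k < n + t) (hE : E ⊆ Iv n) (hG : G ⊆ Iv n) (hEk : #E ≤ k) (hGk : #G ≤ k)
    (hEgen : IsGenerator n k F E) (hGgen : IsGenerator n k F G) : t ≤ #(E ∩ G) := by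
  by_contra! hlt
  rw [← card_Iv n] at hkn hkt
  obtain ⟨B, hB, hEB, hBG⟩ :=
    exists_superset_card_eq_card_inter_lt hE hG hEk hGk hkn hkt hlt
  obtain ⟨hBn, hBk⟩ := mem_powersetCard.1 hB
  obtain ⟨C, hC, hGC, hCB⟩ := exists_superset_card_eq_card_inter_lt hG hBn hGk hBk.le hkn hkt
    (inter_comm B G ▸ hBG)
  exact (hint C (hGgen C hC hGC) B (hEgen B hB hEB)).not_gt hCB

lemma LeftCompressed.isGenerator_insert_erase (hF : LeftCompressed n F) {j : ℕ} (hj : 1 ≤ j)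
    (hjl : j < l) (hln : l ≤ n) (hjE : j ∉ E) (hE : IsGenerator n k F E) :
    IsGenerator n k F (insert j (E.erase l)) := by
  intro B hB hEB
  obtain ⟨hjB, hElB⟩ := insert_subset_iff.1 hEB
  by_cases hlB : l ∈ B
  · exact hE B hB fun x hx => by
      obtain rfl | hxl := eq_or_ne x l
      · exact hlB
      · exact hElB (mem_erase.2 ⟨hxl, hx⟩)
  have hunshift : insert l (B.erase j) ∈ F := by
    refine hE _ (insert_erase_mem_KSets hB (mem_Iv.2 ⟨by lia, hln⟩) hlB hjB) ?_
    rw [← erase_eq_of_notMem hjE, subset_insert_iff, erase_right_comm]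
    exact erase_subset_erase j hElB
  have hshift := hF.insert_erase_mem hj hjl hln hunshift (mem_insert_self l _) (by grind)
  rwa [erase_insert (notMem_mono (erase_subset j B) hlB), insert_erase hjB] at hshift

lemma isGeneratedOn_self (hF : F ⊆ KSets n k) : IsGeneratedOn n k n F := by
  intro A hA B hB hAB
  obtain ⟨hAn, hAk⟩ := mem_KSets.1 (hF hA)
  rw [inter_eq_left.2 hAn] at hAB
  rwa [← eq_of_subset_of_card_le hAB ((mem_KSets.1 hB).2.trans hAk.symm).le]

open Classical in
/-- The generators `E ⊆ [l]` of size at most `k` that need their point `l`: `E \ {l}` no longer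
generates. -/
noncomputable def criticalGenerators (n k l : ℕ) (F : Finset (Finset ℕ)) : Finset (Finset ℕ) :=
  {E ∈ (Iv l).powerset | l ∈ E ∧ #E ≤ k ∧ IsGenerator n k F E ∧ ¬ IsGenerator n k F (E.erase l)}

lemma mem_criticalGenerators : E ∈ criticalGenerators n k l F ↔
    E ⊆ Iv l ∧ l ∈ E ∧ #E ≤ k ∧ IsGenerator n k F E ∧ ¬ IsGenerator n k F (E.erase l) := by
  simp only [criticalGenerators, mem_filter, mem_powerset]

lemma LeftCompressed.succ_sub_card_le_of_mem_criticalGenerators (hF : LeftCompressed n F)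
    (hln : l ≤ n) (hE : E ∈ criticalGenerators n k l F) : k + 1 - #E ≤ n - l := by
  obtain ⟨-, hlE, -, hEgen, hEcrit⟩ := mem_criticalGenerators.1 hE
  unfold IsGenerator at hEcrit
  push Not at hEcrit
  obtain ⟨B, hB, hEB, hBF⟩ := hEcrit
  have hlB : l ∉ B := fun hl => hBF (hEgen B hB (insert_erase hlE ▸ insert_subset hl hEB))
  have htrace : B ∩ Iv l ⊆ E.erase l := by
    intro x hx
    obtain ⟨hxB, hxl⟩ := mem_inter.1 hx
    have hne : x ≠ l := fun h => hlB (h ▸ hxB)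
    refine mem_erase.2 ⟨hne, by_contra fun hxE => ?_⟩
    exact hBF (hF.isGenerator_insert_erase (mem_Iv.1 hxl).1
      (lt_of_le_of_ne (mem_Iv.1 hxl).2 hne) hln hxE hEgen B hB (insert_subset hxB hEB))
  have hinter : #(B ∩ Iv l) + 1 ≤ #E :=
    (Nat.succ_le_succ (card_le_card htrace)).trans (card_erase_add_one hlE).le
  have hdiff : #(B \ Iv l) ≤ n - l := by
    have hle := card_le_card (sdiff_subset_sdiff (mem_KSets.1 hB).1 (Subset.refl (Iv l)))
    rwa [card_sdiff_of_subset (Iv_subset_Iv hln), card_Iv, card_Iv] at hle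
  have hsplit := card_sdiff_add_card_inter B (Iv l)
  rw [(mem_KSets.1 hB).2] at hsplit
  lia

lemma LeftCompressed.lt_card_inter_of_notMem (hF : LeftCompressed n F) (hint : IntersectingT t F)
    (hkn : k ≤ n) (hkt : 2 * k < n + t) (hln : l ≤ n) (hE : E ∈ criticalGenerators n k l F)
    (hG : G ∈ criticalGenerators n k l F) {j : ℕ} (hj : j ∈ Iv l) (hjE : j ∉ E) (hjG : j ∉ G) :
    t < #(E ∩ G) := by
  obtain ⟨hEl, hlE, hEk, hEgen, -⟩ := mem_criticalGenerators.1 hE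
  obtain ⟨hGl, hlG, hGk, hGgen, -⟩ := mem_criticalGenerators.1 hG
  have hlI : Iv l ⊆ Iv n := Iv_subset_Iv hln
  have hjl : j < l := lt_of_le_of_ne (mem_Iv.1 hj).2 fun h => hjE (h ▸ hlE)
  have hle : t ≤ #(insert j (E.erase l) ∩ G) :=
    hint.le_card_inter_of_isGenerator hkn hkt
      (insert_subset (hlI hj) ((erase_subset l E).trans (hEl.trans hlI))) (hGl.trans hlI)
      ((card_insert_erase_of_notMem hjE hlE).trans_le hEk) hGk
      (hF.isGenerator_insert_erase (mem_Iv.1 hj).1 hjl hln hjE hEgen) hGgen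
  rw [insert_inter_of_notMem hjG, erase_inter] at hle
  exact hle.trans_lt (card_erase_lt_of_mem (mem_inter.2 ⟨hlE, hlG⟩))

lemma LeftCompressed.lt_card_inter_of_card_add_card_ne (hF : LeftCompressed n F)
    (hint : IntersectingT t F) (hkn : k ≤ n) (hkt : 2 * k < n + t) (hln : l ≤ n)
    (hE : E ∈ criticalGenerators n k l F) (hG : G ∈ criticalGenerators n k l F)
    (hne : #E + #G ≠ l + t) : t < #(E ∩ G) := by
  obtain ⟨hEl, -, hEk, hEgen, -⟩ := mem_criticalGenerators.1 hE
  obtain ⟨hGl, -, hGk, hGgen, -⟩ := mem_criticalGenerators.1 hG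
  by_cases hunion : E ∪ G = Iv l
  · have hle := hint.le_card_inter_of_isGenerator hkn hkt (hEl.trans (Iv_subset_Iv hln))
      (hGl.trans (Iv_subset_Iv hln)) hEk hGk hEgen hGgen
    have hcard := card_union_add_card_inter E G
    rw [hunion, card_Iv] at hcard
    lia
  · obtain ⟨j, hj, hjEG⟩ := exists_of_ssubset ((union_subset hEl hGl).ssubset_of_ne hunion)
    rw [mem_union, not_or] at hjEG
    exact hF.lt_card_inter_of_notMem hint hkn hkt hln hE hG hj hjEG.1 hjEG.2

lemma IsGeneratedOn.of_criticalGenerators_eq_empty (hgen : IsGeneratedOn n k (l + 1) F)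
    (hF : F ⊆ KSets n k) (hC : criticalGenerators n k (l + 1) F = ∅) : IsGeneratedOn n k l F := by
  intro A hA
  have herase : (A ∩ Iv (l + 1)).erase (l + 1) ⊆ A ∩ Iv l := by
    intro x hx
    simp only [mem_erase, mem_inter, mem_Iv] at hx ⊢
    exact ⟨hx.2.1, hx.2.2.1, by lia⟩
  refine IsGenerator.mono ?_ herase
  by_cases hl : l + 1 ∈ A ∩ Iv (l + 1)
  · by_contra hcrit
    have hmem : A ∩ Iv (l + 1) ∈ criticalGenerators n k (l + 1) F :=
      mem_criticalGenerators.2 ⟨inter_subset_right, hl,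
        (card_le_card inter_subset_left).trans (mem_KSets.1 (hF hA)).2.le, hgen A hA, hcrit⟩
    exact notMem_empty _ (hC ▸ hmem)
  · rw [erase_eq_of_notMem hl]
    exact hgen A hA

end Generators

section Exchange

variable {n k t l : ℕ} {F X Y : Finset (Finset ℕ)}

/-- The exchange step: delete from `F` the members with trace in `Y` on `[l]`, and add all
`k`-subsets of `[n]` with trace `E \ {l}` for some `E ∈ X`. -/
def exchange (n k l : ℕ) (F X Y : Finset (Finset ℕ)) : Finset (Finset ℕ) :=
  F \ withTrace n k l Y ∪ withTrace n k l (X.image fun E => E.erase l)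

lemma IsGeneratedOn.disjoint_withTrace_erase (hgen : IsGeneratedOn n k l F)
    (hX : X ⊆ criticalGenerators n k l F) :
    Disjoint F (withTrace n k l (X.image fun E => E.erase l)) := by
  refine disjoint_left.2 fun A hA hAX => ?_
  obtain ⟨E, hE, hEA⟩ := mem_image.1 (mem_filter.1 hAX).2
  exact (mem_criticalGenerators.1 (hX hE)).2.2.2.2 (hEA ▸ hgen A hA)

lemma card_withTrace_erase (hln : l ≤ n) (hX : X ⊆ criticalGenerators n k l F) {i : ℕ}
    (hXi : ∀ E ∈ X, #E = i) :
    #(withTrace n k l (X.image fun E => E.erase l)) = #X * (n - l).choose (k + 1 - i) := by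
  have hXl : ∀ E ∈ X, l ∈ E := fun E hE => (mem_criticalGenerators.1 (hX hE)).2.1
  rw [card_withTrace hln, sum_image]
  · refine sum_const_nat fun E hE => ?_
    rw [← hXi E hE, ← card_erase_add_one (hXl E hE), Nat.add_sub_add_right]
  · intro E hE G hG h
    rw [← insert_erase (hXl E hE), ← insert_erase (hXl G hG)]
    exact congrArg (insert l) h
  · refine forall_mem_image.2 fun E hE => ?_
    obtain ⟨hEl, -, hEk, -⟩ := mem_criticalGenerators.1 (hX hE)
    exact ⟨(erase_subset l E).trans hEl, card_erase_le.trans hEk⟩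

lemma IntersectingT.le_card_erase_inter_of_notMem_criticalGenerators (hint : IntersectingT t F)
    (hF : F ⊆ KSets n k) (hkn : k ≤ n) (hkt : 2 * k < n + t) (hln : l ≤ n)
    (hgen : IsGeneratedOn n k l F) {A E : Finset ℕ} (hE : E ∈ criticalGenerators n k l F)
    (hA : A ∈ F) (hAC : A ∩ Iv l ∉ criticalGenerators n k l F) :
    t ≤ #(E.erase l ∩ (A ∩ Iv l)) := by
  obtain ⟨hEl, -, hEk, hEgen, -⟩ := mem_criticalGenerators.1 hE
  have hAk : #(A ∩ Iv l) ≤ k := (card_le_card inter_subset_left).trans (mem_KSets.1 (hF hA)).2.le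
  have hgen' : IsGenerator n k F ((A ∩ Iv l).erase l) := by
    by_cases hlA : l ∈ A ∩ Iv l
    · by_contra hcrit
      exact hAC (mem_criticalGenerators.2 ⟨inter_subset_right, hlA, hAk, hgen A hA, hcrit⟩)
    · rw [erase_eq_of_notMem hlA]
      exact hgen A hA
  have hlI : Iv l ⊆ Iv n := Iv_subset_Iv hln
  have hle := hint.le_card_inter_of_isGenerator hkn hkt (hEl.trans hlI)
    ((erase_subset l _).trans (inter_subset_right.trans hlI)) hEk
    (card_erase_le.trans hAk) hEgen hgen'
  rwa [inter_erase, ← erase_inter] at hle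

lemma IntersectingT.exchange (hint : IntersectingT t F) (hF : F ⊆ KSets n k) (hkn : k ≤ n)
    (hkt : 2 * k < n + t) (hln : l ≤ n) (hgen : IsGeneratedOn n k l F)
    (hX : X ⊆ criticalGenerators n k l F)
    (hXY : ∀ E ∈ X, ∀ G ∈ criticalGenerators n k l F, (G ∈ Y → G ∈ X) → t < #(E ∩ G)) :
    IntersectingT t (exchange n k l F X Y) := by
  have herase : ∀ E ∈ X, ∀ G ∈ criticalGenerators n k l F, (G ∈ Y → G ∈ X) →
      t ≤ #((E ∩ G).erase l) := fun E hE G hG hGXY =>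
    (Nat.le_sub_one_of_lt (hXY E hE G hG hGXY)).trans pred_card_le_card_erase
  refine (hint.mono sdiff_subset).union ?_ ?_
  · intro A hA B hB
    obtain ⟨E, hE, hEA⟩ := mem_image.1 (mem_filter.1 hA).2
    obtain ⟨G, hG, hGB⟩ := mem_image.1 (mem_filter.1 hB).2
    calc t ≤ #((E ∩ G).erase l) := herase E hE G (hX hG) fun _ => hG
      _ = #((A ∩ Iv l) ∩ (B ∩ Iv l)) := by
        rw [← hEA, ← hGB, erase_inter, inter_erase, erase_idem]
      _ ≤ #(A ∩ B) := card_le_card (inter_subset_inter inter_subset_left inter_subset_left)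
  · intro A hA B hB
    obtain ⟨hAF, hAY⟩ := mem_sdiff.1 hA
    obtain ⟨E, hE, hEB⟩ := mem_image.1 (mem_filter.1 hB).2
    have hle : t ≤ #(E.erase l ∩ (A ∩ Iv l)) := by
      by_cases hAC : A ∩ Iv l ∈ criticalGenerators n k l F
      · rw [erase_inter]
        exact herase E hE _ hAC fun h => absurd (mem_filter.2 ⟨hF hAF, h⟩) hAY
      · exact hint.le_card_erase_inter_of_notMem_criticalGenerators hF hkn hkt hln hgen
          (hX hE) hAF hAC
    calc t ≤ #((B ∩ Iv l) ∩ (A ∩ Iv l)) := hEB ▸ hle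
      _ ≤ #(B ∩ A) := card_le_card (inter_subset_inter inter_subset_left inter_subset_left)
      _ = #(A ∩ B) := by rw [inter_comm]

lemma IsMaximumIntersecting.card_mul_choose_le (hF : IsMaximumIntersecting n k t F) (hkn : k ≤ n)
    (hkt : 2 * k < n + t) (hln : l ≤ n) (hgen : IsGeneratedOn n k l F)
    (hX : X ⊆ criticalGenerators n k l F) (hY : Y ⊆ criticalGenerators n k l F)
    (hXY : ∀ E ∈ X, ∀ G ∈ criticalGenerators n k l F, (G ∈ Y → G ∈ X) → t < #(E ∩ G))
    {i j : ℕ} (hXi : ∀ E ∈ X, #E = i) (hYj : ∀ E ∈ Y, #E = j) :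
    #X * (n - l).choose (k + 1 - i) ≤ #Y * (n - l).choose (k - j) := by
  have hYcard : #(withTrace n k l Y) = #Y * (n - l).choose (k - j) := by
    rw [card_withTrace hln fun E hE => ?_, sum_const_nat fun E hE => by rw [hYj E hE]]
    obtain ⟨hEl, -, hEk, -⟩ := mem_criticalGenerators.1 (hY hE)
    exact ⟨hEl, hEk⟩
  have hmax := hF.card_le (exchange n k l F X Y)
    (union_subset (sdiff_subset.trans hF.subset_KSets) (filter_subset _ _))
    (hF.intersectingT.exchange hF.subset_KSets hkn hkt hln hgen hX hXY)
  rw [exchange, card_union_of_disjoint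
    (disjoint_of_subset_left sdiff_subset (hgen.disjoint_withTrace_erase hX)),
    card_withTrace_erase hln hX hXi] at hmax
  have hdel := le_card_sdiff (withTrace n k l Y) F
  lia

end Exchange

section Critical

variable {n k t l : ℕ} {F : Finset (Finset ℕ)} {E : Finset ℕ}

lemma IsMaximumIntersecting.card_slice_mul_choose_le (hF : IsMaximumIntersecting n k t F)
    (hs : LeftCompressed n F) (hkn : k ≤ n) (hkt : 2 * k < n + t) (hln : l ≤ n)
    (hgen : IsGeneratedOn n k l F) {i j : ℕ} (hij : i + j = l + t) (hne : i ≠ j) :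
    #((criticalGenerators n k l F).slice i) * (n - l).choose (k + 1 - i)
      ≤ #((criticalGenerators n k l F).slice j) * (n - l).choose (k - j) := by
  refine hF.card_mul_choose_le hkn hkt hln hgen slice_subset slice_subset
    (fun E hE G hG hGij => ?_) (fun E hE => (mem_slice.1 hE).2) (fun E hE => (mem_slice.1 hE).2)
  obtain ⟨hEC, hEi⟩ := mem_slice.1 hE
  refine hs.lt_card_inter_of_card_add_card_ne hF.intersectingT hkn hkt hln hEC hG fun hsum => ?_
  have hGj : #G = j := by lia
  exact hne ((mem_slice.1 (hGij (mem_slice.2 ⟨hG, hGj⟩))).2.symm.trans hGj)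

lemma IsMaximumIntersecting.two_mul_card_eq (hF : IsMaximumIntersecting n k t F)
    (hs : LeftCompressed n F) (hkn : k ≤ n) (hkt : 2 * k + 1 < n + t) (hln : l ≤ n)
    (hgen : IsGeneratedOn n k l F) (hE : E ∈ criticalGenerators n k l F) : 2 * #E = l + t := by
  by_contra hne
  obtain ⟨hEl, -, hEk, -⟩ := mem_criticalGenerators.1 hE
  have hEl' : #E ≤ l := card_Iv l ▸ card_le_card hEl
  have hcodim := hs.succ_sub_card_le_of_mem_criticalGenerators hln hE
  obtain ⟨j, hj⟩ : ∃ j, #E + j = l + t := ⟨l + t - #E, by lia⟩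
  set a := #((criticalGenerators n k l F).slice #E)
  set b := #((criticalGenerators n k l F).slice j)
  have ha : 0 < a := card_pos.2 ⟨E, mem_slice.2 ⟨hE, rfl⟩⟩
  have hab : a * (n - l).choose (k + 1 - #E) ≤ b * (n - l).choose (k - j) :=
    hF.card_slice_mul_choose_le hs hkn (by lia) hln hgen hj (by lia)
  have hba : b * (n - l).choose (k + 1 - j) ≤ a * (n - l).choose (k - #E) :=
    hF.card_slice_mul_choose_le hs hkn (by lia) hln hgen (by lia) (by lia)
  have hb : 0 < b := Nat.pos_of_mul_pos_right
    ((Nat.mul_pos ha (Nat.choose_pos hcodim)).trans_le hab)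
  have hjk : j ≤ k := by
    obtain ⟨G, hG⟩ := card_pos.1 hb
    obtain ⟨hGC, rfl⟩ := mem_slice.1 hG
    exact (mem_criticalGenerators.1 hGC).2.2.1
  have hlt := choose_mul_choose_lt_choose_succ_mul_choose_succ
    (show (k - #E) + (k - j) + 1 < n - l by lia)
  rw [← Nat.sub_add_comm hEk, ← Nat.sub_add_comm hjk] at hlt
  refine (Nat.mul_le_mul hab hba).not_gt ?_
  calc b * (n - l).choose (k - j) * (a * (n - l).choose (k - #E))
      = a * b * ((n - l).choose (k - #E) * (n - l).choose (k - j)) := by ring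
    _ < a * b * ((n - l).choose (k + 1 - #E) * (n - l).choose (k + 1 - j)) :=
      Nat.mul_lt_mul_of_pos_left hlt (Nat.mul_pos ha hb)
    _ = a * (n - l).choose (k + 1 - #E) * (b * (n - l).choose (k + 1 - j)) := by ring

lemma IsMaximumIntersecting.card_filter_notMem_mul_choose_le (hF : IsMaximumIntersecting n k t F)
    (hs : LeftCompressed n F) (hkn : k ≤ n) (hkt : 2 * k < n + t) (hln : l ≤ n)
    (hgen : IsGeneratedOn n k l F) {i j : ℕ} (hi : ∀ E ∈ criticalGenerators n k l F, #E = i)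
    (hj : j ∈ Iv l) :
    #{E ∈ criticalGenerators n k l F | j ∉ E} * (n - l).choose (k + 1 - i)
      ≤ #{E ∈ criticalGenerators n k l F | j ∈ E} * (n - l).choose (k - i) := by
  refine hF.card_mul_choose_le hkn hkt hln hgen (filter_subset _ _) (filter_subset _ _)
    (fun E hE G hG hGj => ?_) (fun E hE => hi E (mem_filter.1 hE).1)
    (fun E hE => hi E (mem_filter.1 hE).1)
  obtain ⟨hEC, hjE⟩ := mem_filter.1 hE
  refine hs.lt_card_inter_of_notMem hF.intersectingT hkn hkt hln hEC hG hj hjE fun hjG => ?_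
  exact (mem_filter.1 (hGj (mem_filter.2 ⟨hG, hjG⟩))).2 hjG

lemma IsMaximumIntersecting.sub_mul_choose_le (hF : IsMaximumIntersecting n k t F)
    (hs : LeftCompressed n F) (hkn : k ≤ n) (hkt : 2 * k < n + t) (hln : l ≤ n)
    (hgen : IsGeneratedOn n k l F) {i : ℕ} (hi : ∀ E ∈ criticalGenerators n k l F, #E = i)
    (hne : (criticalGenerators n k l F).Nonempty) :
    (l - i) * (n - l).choose (k + 1 - i) ≤ (i - 1) * (n - l).choose (k - i) := by
  set C := criticalGenerators n k l F
  have hout : ∀ E ∈ C, #((Iv l).erase l \ E) = l - i := fun E hE => by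
    obtain ⟨hEl, hlE, -⟩ := mem_criticalGenerators.1 hE
    rw [erase_sdiff_comm, erase_eq_of_notMem fun h => (mem_sdiff.1 h).2 hlE,
      card_sdiff_of_subset hEl, card_Iv, hi E hE]
  have hin : ∀ E ∈ C, #((Iv l).erase l ∩ E) = i - 1 := fun E hE => by
    obtain ⟨hEl, hlE, -⟩ := mem_criticalGenerators.1 hE
    rw [erase_inter, inter_eq_right.2 hEl, card_erase_of_mem hlE, hi E hE]
  refine Nat.le_of_mul_le_mul_left ?_ (card_pos.2 hne)
  calc #C * ((l - i) * (n - l).choose (k + 1 - i))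
      = ∑ j ∈ (Iv l).erase l, #{E ∈ C | j ∉ E} * (n - l).choose (k + 1 - i) := by
        rw [← sum_mul, sum_card_filter_notMem, sum_const_nat hout, mul_assoc]
    _ ≤ ∑ j ∈ (Iv l).erase l, #{E ∈ C | j ∈ E} * (n - l).choose (k - i) :=
        sum_le_sum fun j hj =>
          hF.card_filter_notMem_mul_choose_le hs hkn hkt hln hgen hi (mem_of_mem_erase hj)
    _ = #C * ((i - 1) * (n - l).choose (k - i)) := by
        rw [← sum_mul, sum_card_filter_mem, sum_const_nat hin, mul_assoc]

lemma add_mul_succ_le_mul {t r p m : ℕ} (ht : 2 ≤ t) (hr : 2 ≤ r)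
    (h : (t + 1) * (r + p + 1) ≤ t + 2 * r + p + m) : (t + r) * (p + 1) ≤ r * m := by
  obtain ⟨s, rfl⟩ := Nat.exists_eq_add_of_le ht
  obtain ⟨u, rfl⟩ := Nat.exists_eq_add_of_le hr
  have hm : (1 + s) * (2 + u) + (2 + s) * p + 1 ≤ m := by linarith
  calc (2 + s + (2 + u)) * (p + 1)
      ≤ (2 + u) * ((1 + s) * (2 + u) + (2 + s) * p + 1) := by ring_nf; lia
    _ ≤ (2 + u) * m := Nat.mul_le_mul_left _ hm

lemma IsMaximumIntersecting.criticalGenerators_eq_empty (hF : IsMaximumIntersecting n k t F)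
    (hs : LeftCompressed n F) (hkn : k ≤ n) (hkt : 2 * k + 1 < n + t) (ht : 2 ≤ t)
    (hn : (t + 1) * (k - t + 1) ≤ n) (htl : t + 3 ≤ l) (hln : l ≤ n)
    (hgen : IsGeneratedOn n k l F) : criticalGenerators n k l F = ∅ := by
  by_contra hne
  obtain ⟨E, hE⟩ := nonempty_iff_ne_empty.2 hne
  have hcard := hF.two_mul_card_eq hs hkn hkt hln hgen hE
  obtain ⟨r, hr⟩ : ∃ r, #E = t + r := ⟨#E - t, by lia⟩
  obtain ⟨p, rfl⟩ : ∃ p, k = t + r + p :=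
    ⟨k - #E, by have := (mem_criticalGenerators.1 hE).2.2.1; lia⟩
  obtain rfl : l = t + 2 * r := by lia
  have hsize : ∀ G ∈ criticalGenerators n (t + r + p) (t + 2 * r) F, #G = t + r := fun G hG => by
    have := hF.two_mul_card_eq hs hkn hkt hln hgen hG
    lia
  have hcodim := hs.succ_sub_card_le_of_mem_criticalGenerators hln hE
  have hle := hF.sub_mul_choose_le hs hkn (by lia) hln hgen hsize ⟨E, hE⟩
  rw [show t + 2 * r - (t + r) = r by lia, show t + r + p + 1 - (t + r) = p + 1 by lia,
    show t + r + p - (t + r) = p by lia] at hle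
  have harith : (t + r) * (p + 1) ≤ r * (n - (t + 2 * r) - p) :=
    add_mul_succ_le_mul ht (by lia) (by
      rw [show t + r + p - t = r + p by lia] at hn
      exact hn.trans (by lia))
  have hge := (mul_choose_le_mul_choose_succ_iff (by lia)).2 harith
  exact (hge.trans hle).not_gt
    (Nat.mul_lt_mul_of_pos_right (by lia) (Nat.choose_pos (by lia)))

lemma IsMaximumIntersecting.isGeneratedOn_add_two (hF : IsMaximumIntersecting n k t F)
    (hs : LeftCompressed n F) (hkn : k ≤ n) (hkt : 2 * k + 1 < n + t) (ht : 2 ≤ t)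
    (hn : (t + 1) * (k - t + 1) ≤ n) (htn : t + 2 ≤ n) : IsGeneratedOn n k (t + 2) F := by
  refine Nat.decreasingInduction' (P := fun l => IsGeneratedOn n k l F)
    (fun l hln htl hgen => ?_) htn (isGeneratedOn_self hF.subset_KSets)
  exact hgen.of_criticalGenerators_eq_empty hF.subset_KSets
    (hF.criticalGenerators_eq_empty hs hkn hkt ht hn (by lia) hln hgen)

end Critical

section Frankl

variable {n k t : ℕ} {F : Finset (Finset ℕ)}

lemma card_AK_sdiff_le (htk : t < k) (htn : t + 2 ≤ n) :
    #(AK n k t \ {A ∈ KSets n k | Iv t ⊆ A}) ≤ t * (n - (t + 2)).choose (k - (t + 1)) := by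
  have hcard : ∀ x ∈ Iv t, #((Iv (t + 2)).erase x) = t + 1 := fun x hx => by
    rw [card_erase_of_mem (Iv_subset_Iv (by lia) hx), card_Iv, Nat.add_succ_sub_one]
  set Z := (Iv t).image fun x => (Iv (t + 2)).erase x
  have hZ : ∀ E ∈ Z, #E = t + 1 := forall_mem_image.2 hcard
  have hsub : AK n k t \ {A ∈ KSets n k | Iv t ⊆ A} ⊆ withTrace n k (t + 2) Z := by
    intro A hA
    obtain ⟨hAK, hstar⟩ := mem_sdiff.1 hA
    obtain ⟨hAn, hAt⟩ := mem_filter.1 hAK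
    obtain ⟨x, hx, hxA⟩ := not_subset.1 fun h => hstar (mem_filter.2 ⟨hAn, h⟩)
    have htrace : A ∩ Iv (t + 2) ⊆ (Iv (t + 2)).erase x :=
      subset_erase.2 ⟨inter_subset_right, notMem_mono inter_subset_left hxA⟩
    exact mem_filter.2 ⟨hAn, mem_image.2 ⟨x, hx,
      (eq_of_subset_of_card_le htrace ((hcard x hx).trans_le hAt)).symm⟩⟩
  calc #(AK n k t \ {A ∈ KSets n k | Iv t ⊆ A})
      ≤ #(withTrace n k (t + 2) Z) := card_le_card hsub
    _ = #Z * (n - (t + 2)).choose (k - (t + 1)) := by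
      rw [card_withTrace htn fun E hE => ⟨?_, (hZ E hE).trans_le htk⟩,
        sum_const_nat fun E hE => by rw [hZ E hE]]
      obtain ⟨x, -, rfl⟩ := mem_image.1 hE
      exact erase_subset x _
    _ ≤ t * (n - (t + 2)).choose (k - (t + 1)) :=
      Nat.mul_le_mul_right _ (card_image_le.trans (card_Iv t).le)

lemma choose_le_card_sdiff_AK (htk : t ≤ k) (htn : t + 2 ≤ n) :
    (n - (t + 2)).choose (k - t) ≤ #({A ∈ KSets n k | Iv t ⊆ A} \ AK n k t) := by
  have hcard : #(withTrace n k (t + 2) {Iv t}) = (n - (t + 2)).choose (k - t) := by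
    have hIv : Iv t ⊆ Iv (t + 2) ∧ #(Iv t) ≤ k :=
      ⟨Iv_subset_Iv (by lia), (card_Iv t).trans_le htk⟩
    rw [card_withTrace htn fun E hE => mem_singleton.1 hE ▸ hIv, sum_singleton, card_Iv]
  rw [← hcard]
  refine card_le_card fun A hA => ?_
  obtain ⟨hAn, hAt⟩ := mem_filter.1 hA
  rw [mem_singleton] at hAt
  refine mem_sdiff.2 ⟨mem_filter.2 ⟨hAn, hAt ▸ inter_subset_left⟩, fun hAK => ?_⟩
  have hlt := (mem_filter.1 hAK).2
  rw [hAt, card_Iv] at hlt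
  exact hlt.not_gt t.lt_succ_self

lemma card_AK_le (htk : t < k) (hn : (t + 1) * (k - t + 1) ≤ n) :
    #(AK n k t) ≤ (n - t).choose (k - t) := by
  obtain ⟨a, rfl⟩ := Nat.exists_eq_add_of_lt htk
  have hn' : t * (a + 1) + a + (t + 2) ≤ n :=
    calc t * (a + 1) + a + (t + 2) = (t + 1) * (a + 1 + 1) := by ring
      _ ≤ n := by rwa [show t + a + 1 - t = a + 1 by lia] at hn
  have htn : t + 2 ≤ n := by lia
  have hchoose : t * (n - (t + 2)).choose a ≤ 1 * (n - (t + 2)).choose (a + 1) :=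
    (mul_choose_le_mul_choose_succ_iff (by lia)).2 (by lia)
  have hstar := card_filter_KSets_superset (k := t + a + 1) (Iv_subset_Iv (show t ≤ n by lia))
    (by rw [card_Iv]; lia)
  rw [card_Iv] at hstar
  rw [← hstar, ← card_sdiff_le_card_sdiff_iff]
  refine (card_AK_sdiff_le htk htn).trans (le_trans ?_ (choose_le_card_sdiff_AK htk.le htn))
  rwa [one_mul, ← show t + a + 1 - (t + 1) = a by lia,
    show t + a + 1 - (t + 1) + 1 = t + a + 1 - t by lia] at hchoose

lemma IntersectingT.card_le_choose_of_isGeneratedOn (hint : IntersectingT t F)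
    (hF : F ⊆ KSets n k) (htk : t < k) (hkn : k ≤ n) (hkt : 2 * k < n + t) (htn : t + 2 ≤ n)
    (hn : (t + 1) * (k - t + 1) ≤ n) (hgen : IsGeneratedOn n k (t + 2) F) :
    #F ≤ (n - t).choose (k - t) := by
  by_cases hAK : F ⊆ AK n k t
  · exact (card_le_card hAK).trans (card_AK_le htk hn)
  obtain ⟨A, hA, hAAK⟩ := not_subset.1 hAK
  have hl : Iv (t + 2) ⊆ Iv n := Iv_subset_Iv htn
  have htrace : ∀ B ∈ F, t ≤ #(A ∩ Iv (t + 2) ∩ B) := fun B hB => by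
    obtain ⟨hBn, hBk⟩ := mem_KSets.1 (hF hB)
    exact hint.le_card_inter_of_isGenerator hkn hkt (inter_subset_right.trans hl) hBn
      ((card_le_card inter_subset_left).trans (mem_KSets.1 (hF hA)).2.le) hBk.le (hgen A hA)
      ((hgen B hB).mono inter_subset_left)
  have hcard : #(A ∩ Iv (t + 2)) = t := by
    refine le_antisymm ?_ ((htrace A hA).trans (card_le_card inter_subset_left))
    by_contra! hlt
    exact hAAK (mem_filter.2 ⟨hF hA, hlt⟩)
  have hstar := card_le_choose_of_forall_superset (E := A ∩ Iv (t + 2)) hF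
    (inter_subset_right.trans hl) (hcard.trans_le htk.le)
    fun B hB => subset_of_card_le_card_inter (hcard.trans_le (htrace B hB))
  rwa [hcard] at hstar

end Frankl

/-- **`t`-intersecting Erdős–Ko–Rado theorem with Wilson's sharp bound.** -/
theorem stmt_17 (t k n : ℕ) (ht : 0 < t) (htk : t ≤ k) (hkn : k ≤ n)
    (hn : (t + 1) * (k - t + 1) ≤ n)
    (F : Finset (Finset ℕ)) (hF : F ⊆ KSets n k) (hint : IntersectingT t F) :
    F.card ≤ (n - t).choose (k - t) := by
  obtain rfl | hlt := htk.eq_or_lt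
  · rw [Nat.sub_self, Nat.choose_zero_right]
    exact IntersectingT.card_le_one hF hint
  obtain rfl | ht2 : t = 1 ∨ 2 ≤ t := by lia
  · rw [← card_Iv n]
    exact card_le_choose_of_intersecting hF hint.intersecting (by rw [card_Iv]; lia)
  have hkt : 2 * k + 1 < n + t := by
    obtain ⟨a, rfl⟩ := Nat.exists_eq_add_of_lt hlt
    rw [show t + a + 1 - t = a + 1 by lia] at hn
    nlinarith
  obtain ⟨G, hG, hGs⟩ := exists_isMaximumIntersecting_leftCompressed n k t
  have hgen : IsGeneratedOn n k (t + 2) G :=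
    hG.isGeneratedOn_add_two hGs hkn hkt ht2 hn (by lia)
  exact (hG.card_le F hF hint).trans <|
    hG.intersectingT.card_le_choose_of_isGeneratedOn hG.subset_KSets hlt hkn (by lia) (by lia) hn
      hgen
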